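/- Fix real parameters 0 < x1 ≤ 1 and 0 < x2, y1, y2 ≤ 1 with x2 > y1·y2. Then the quantity N(R) = 2 Σ_{Q' ≥ R/y2} Σ_{1 ≤ Q ≤ min(x2 Q', y1 R), gcd(Q,Q')=1} x1/(Q'(Q' + x1 Q)) satisfies N(R) = -(2/ζ(2)) Li2(-x1 y1 y2) + O(x1 log R / R) as R → ∞. -/

import Mathlib

open Real

/-- The dilogarithm `Li₂(z) = ∑_{k ≥ 1} z^k / k²`. -/
noncomputable def Li2 (z : ℝ) : ℝ := ∑' k : ℕ, z ^ (k + 1) / ((k : ℝ) + 1) ^ 2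

/-- `N(R) = 2 ∑_{Q' ≥ R/y₂} ∑_{1 ≤ Q ≤ min(x₂Q', y₁R), (Q,Q')=1} x₁/(Q'(Q'+x₁Q))`. -/
noncomputable def NN (x1 x2 y1 y2 R : ℝ) : ℝ :=
  2 * ∑' Q' : ℕ, if R / y2 ≤ (Q' : ℝ) then
    ∑ Q ∈ Finset.Icc 1 ⌊min (x2 * Q') (y1 * R)⌋₊,
      if Nat.gcd Q Q' = 1 then x1 / ((Q' : ℝ) * ((Q' : ℝ) + x1 * Q)) else 0
  else 0

open Filter Finset MeasureTheory
open scoped ArithmeticFunction.Moebius ArithmeticFunction.zeta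

/-!
Exchange the two sums. For fixed `Q`, comparing the sum over `Q' ≥ B` with an integral gives
`log (1 + x Q / B) / Q` up to `x / B²`. Summed over `Q ≤ c B`, these values form, up to `x / B`, a
Riemann sum with mesh `x / B` of `∫ w in 0..x c, log (1 + w) / w = -Li₂(-x c)`. The kernel is
homogeneous of degree `-2`, so removing the coprimality condition by Möbius inversion replaces `B`
by `B / d` with weight `μ(d) / d²`: the main terms produce the factor `∑ μ(d) / d² = 1 / ζ(2)` and
the errors `O(x d / B)` add up to `O(x log B / B)`. This applies with `B = R / y₂` and `c = y₁ y₂`,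
since `y₁ y₂ ≤ x₂` forces `min (x₂ Q') (y₁ R) = y₁ R` for all `Q' ≥ R / y₂`.
-/

/-! ### Sums and integrals of antitone functions -/

section Antitone

variable {f : ℝ → ℝ}

lemma integral_le_of_antitoneOn {u v : ℝ} (huv : u ≤ v) (anti : AntitoneOn f (Set.Icc u v)) :
    ∫ t in u..v, f t ≤ (v - u) * f u := by
  have int : IntervalIntegrable f volume u v :=
    AntitoneOn.intervalIntegrable (by rwa [Set.uIcc_of_le huv])
  simpa using intervalIntegral.integral_mono_on huv int (intervalIntegrable_const (c := f u))
    fun t ht => anti ⟨le_rfl, huv⟩ ht ht.1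

lemma abs_sum_Icc_one_sub_integral_le {A : ℝ} (hA : 0 ≤ A)
    (anti : AntitoneOn f (Set.Icc 0 A)) (nonneg : 0 ≤ f A) :
    |∑ k ∈ Icc 1 ⌊A⌋₊, f k - ∫ t in 0..A, f t| ≤ f 0 := by
  set n := ⌊A⌋₊
  have hn0 : (0 : ℝ) ≤ n := n.cast_nonneg
  have hnA : (n : ℝ) ≤ A := Nat.floor_le hA
  have hAn : A - n ≤ 1 := by linarith [Nat.lt_floor_add_one A]
  have anti_start : AntitoneOn f (Set.Icc 0 (0 + n)) :=
    anti.mono (Set.Icc_subset_Icc_right (by rwa [zero_add]))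
  have anti_end : AntitoneOn f (Set.Icc n A) := anti.mono (Set.Icc_subset_Icc_left hn0)
  have int_add : (∫ t in 0..n, f t) + ∫ t in n..A, f t = ∫ t in 0..A, f t :=
    intervalIntegral.integral_add_adjacent_intervals
      (AntitoneOn.intervalIntegrable (by simpa [Set.uIcc_of_le hn0] using anti_start))
      (AntitoneOn.intervalIntegrable (by rwa [Set.uIcc_of_le hnA]))
  have hfA : f A ≤ f n := anti ⟨hn0, hnA⟩ ⟨hA, le_rfl⟩ hnA
  have hfn : f n ≤ f 0 := anti ⟨le_rfl, hA⟩ ⟨hn0, hnA⟩ hn0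
  have hsum : ∑ k ∈ Icc 1 n, f k = ∑ k ∈ range n, f (k + 1 : ℕ) := by
    rw [range_eq_Ico, sum_Ico_add' (fun k : ℕ => f k) 0 n 1]
    rfl
  have hsum_le : ∑ k ∈ Icc 1 n, f k ≤ ∫ t in 0..n, f t := by
    simpa [hsum] using anti_start.sum_le_integral
  have hle_sum : (∫ t in 0..n, f t) + f n ≤ f 0 + ∑ k ∈ Icc 1 n, f k := by
    have hle : ∫ t in 0..n, f t ≤ ∑ k ∈ range n, f k := by
      simpa using anti_start.integral_le_sum
    have hshift := sum_range_succ' (fun k : ℕ => f k) n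
    rw [sum_range_succ, Nat.cast_zero] at hshift
    linarith
  have hend_nonneg : 0 ≤ ∫ t in n..A, f t :=
    intervalIntegral.integral_nonneg hnA fun t ht =>
      nonneg.trans (anti ⟨hn0.trans ht.1, ht.2⟩ ⟨hA, le_rfl⟩ ht.2)
  have hend_le : ∫ t in n..A, f t ≤ f n :=
    (integral_le_of_antitoneOn hnA anti_end).trans
      (mul_le_of_le_one_left (nonneg.trans hfA) hAn)
  rw [← int_add, abs_le]
  constructor <;> linarith

lemma summable_natCast_of_antitoneOn_Ici {B : ℝ} (anti : AntitoneOn f (Set.Ici B))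
    (int : IntegrableOn f (Set.Ioi B)) (nonneg : ∀ t ∈ Set.Ioi B, 0 ≤ f t) :
    Summable fun m : ℕ => f m :=
  have hB : B ≤ ⌈B⌉₊ := Nat.le_ceil B
  AntitoneOn.summable_of_integrableOn_Ioi (N := ⌈B⌉₊) (anti.mono (Set.Ici_subset_Ici.mpr hB))
    (int.mono_set (Set.Ioi_subset_Ioi hB)) fun t ht => nonneg t (hB.trans_lt ht)

lemma tsum_ite_le_eq_tsum_add_ceil (g : ℕ → ℝ) (B : ℝ) :
    ∑' m : ℕ, (if B ≤ m then g m else 0) = ∑' k, g (k + ⌈B⌉₊) := by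
  rw [← (add_left_injective ⌈B⌉₊).tsum_eq]
  · have hB (k : ℕ) : B ≤ k + ⌈B⌉₊ := (Nat.le_ceil B).trans (le_add_of_nonneg_left k.cast_nonneg)
    simp [hB]
  · intro m hm
    have hBm : B ≤ m := of_not_not fun h => hm (if_neg h)
    exact ⟨m - ⌈B⌉₊, Nat.sub_add_cancel (Nat.ceil_le.mpr hBm)⟩

lemma abs_tsum_ite_le_sub_integral_Ioi_le {B : ℝ} (hB : 0 ≤ B)
    (anti : AntitoneOn f (Set.Ici B)) (int : IntegrableOn f (Set.Ioi B))
    (nonneg : ∀ t ∈ Set.Ioi B, 0 ≤ f t) :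
    |∑' m : ℕ, (if B ≤ m then f m else 0) - ∫ t in Set.Ioi B, f t| ≤ f B := by
  rw [tsum_ite_le_eq_tsum_add_ceil fun m => f m]
  set M := ⌈B⌉₊
  have hBM : B ≤ M := Nat.le_ceil B
  have hMB : M - B ≤ 1 := by linarith [Nat.ceil_lt_add_one hB]
  have anti_M : AntitoneOn f (Set.Ici (M : ℝ)) := anti.mono (Set.Ici_subset_Ici.mpr hBM)
  have int_M : IntegrableOn f (Set.Ioi (M : ℝ)) := int.mono_set (Set.Ioi_subset_Ioi hBM)
  have nonneg_M : ∀ t ∈ Set.Ioi (M : ℝ), 0 ≤ f t := fun t ht => nonneg t (hBM.trans_lt ht)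
  have summable : Summable fun m : ℕ => f m := summable_natCast_of_antitoneOn_Ici anti int nonneg
  have hfM : f M ≤ f B := anti Set.self_mem_Ici hBM hBM
  have hfB : 0 ≤ f B :=
    (nonneg (B + 1) (lt_add_one B)).trans (anti Set.self_mem_Ici (by simp) (by simp))
  have int_add : (∫ t in B..M, f t) + ∫ t in Set.Ioi (M : ℝ), f t = ∫ t in Set.Ioi B, f t :=
    intervalIntegral.integral_interval_add_Ioi int int_M
  have hstart_nonneg : 0 ≤ ∫ t in B..M, f t := by
    rw [intervalIntegral.integral_of_le hBM]
    exact setIntegral_nonneg measurableSet_Ioc fun t ht => nonneg t ht.1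
  have hstart_le : ∫ t in B..M, f t ≤ f B :=
    (integral_le_of_antitoneOn hBM (anti.mono Set.Icc_subset_Ici_self)).trans
      (mul_le_of_le_one_left hfB hMB)
  have hle_tsum : ∫ t in Set.Ioi (M : ℝ), f t ≤ ∑' k : ℕ, f (k + M : ℕ) :=
    anti_M.integral_le_tsum_comp_add M summable nonneg_M
  have htsum_le : ∑' k : ℕ, f (k + M : ℕ) ≤ f M + ∫ t in Set.Ioi (M : ℝ), f t := by
    rw [((summable_nat_add_iff M).mpr summable).tsum_eq_zero_add, zero_add]
    gcongr
    simpa only [add_right_comm] using anti_M.tsum_comp_add_le_integral M int_M nonneg_M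
  rw [← int_add, abs_le]
  constructor <;> linarith

end Antitone

/-! ### Möbius inversion over coprime pairs -/

lemma ne_zero_of_mem_Icc_one {k n : ℕ} (hk : k ∈ Icc 1 n) : k ≠ 0 :=
  Nat.one_le_iff_ne_zero.mp (mem_Icc.mp hk).1

lemma sum_Icc_sum_divisors {M : Type*} [AddCommMonoid M] (h : ℕ → ℕ → M) (n : ℕ) :
    ∑ a ∈ Icc 1 n, ∑ d ∈ a.divisors, h d a = ∑ d ∈ Icc 1 n, ∑ q ∈ Icc 1 (n / d), h d (d * q) := by
  rw [sum_sigma', sum_sigma']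
  refine (sum_bij (fun p _ => ⟨p.1 * p.2, p.1⟩) ?_ ?_ ?_ fun _ _ => rfl).symm
  · rintro ⟨d, q⟩ hp
    obtain ⟨⟨hd, -⟩, hq, hqn⟩ : (1 ≤ d ∧ d ≤ n) ∧ 1 ≤ q ∧ q ≤ n / d := by simpa using hp
    rw [Nat.le_div_iff_mul_le hd, mul_comm] at hqn
    have hdq : 1 ≤ d * q := Nat.mul_pos hd hq
    simpa using ⟨⟨hdq, hqn⟩, by omega⟩
  · rintro ⟨d, q⟩ hp ⟨d', q'⟩ - h
    obtain ⟨hdq, rfl⟩ : d * q = d' * q' ∧ d = d' := by simpa using h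
    have hd : 0 < d := (mem_Icc.mp (mem_sigma.mp hp).1).1
    rw [Nat.eq_of_mul_eq_mul_left hd hdq]
  · rintro ⟨a, d⟩ hp
    obtain ⟨⟨ha, han⟩, ⟨q, rfl⟩, -⟩ : (1 ≤ a ∧ a ≤ n) ∧ d ∣ a ∧ a ≠ 0 := by simpa using hp
    have hd : 0 < d := Nat.pos_of_mul_pos_right ha
    have hq : 0 < q := Nat.pos_of_mul_pos_left ha
    refine ⟨⟨d, q⟩, ?_, rfl⟩
    simp only [mem_sigma, mem_Icc, Nat.le_div_iff_mul_le hd]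
    exact ⟨⟨hd, (Nat.le_mul_of_pos_right d hq).trans han⟩, hq, by rwa [mul_comm]⟩

lemma hasSum_ite_dvd_iff {M : Type*} [AddCommMonoid M] [TopologicalSpace M] {g : ℕ → M} {s : M}
    {d : ℕ} (hd : d ≠ 0) :
    HasSum (fun b => if d ∣ b then g b else 0) s ↔ HasSum (fun m => g (d * m)) s := by
  rw [← (mul_right_injective₀ hd).hasSum_iff fun b hb => if_neg fun ⟨m, hm⟩ => hb ⟨m, hm.symm⟩]
  simp [Function.comp_def]

lemma sum_divisors_ite_dvd_moebius {a : ℕ} (ha : a ≠ 0) (b : ℕ) :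
    ∑ d ∈ a.divisors, (if d ∣ b then (μ d : ℝ) else 0) = if a.gcd b = 1 then 1 else 0 := by
  have hgcd : a.divisors.filter (· ∣ b) = (a.gcd b).divisors := by
    ext d
    simp [Nat.dvd_gcd_iff, ha]
  calc ∑ d ∈ a.divisors, (if d ∣ b then (μ d : ℝ) else 0)
      = ((ζ : ArithmeticFunction ℝ) * (μ : ArithmeticFunction ℝ)) (a.gcd b) := by
        rw [ArithmeticFunction.coe_zeta_mul_apply, ← hgcd, sum_filter]
        rfl
    _ = if a.gcd b = 1 then 1 else 0 := by
        rw [ArithmeticFunction.coe_zeta_mul_coe_moebius, ArithmeticFunction.one_apply]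

lemma hasSum_ite_gcd_eq_one {g : ℕ → ℝ} (hg : Summable g) {a : ℕ} (ha : a ≠ 0) :
    HasSum (fun b => if a.gcd b = 1 then g b else 0)
      (∑ d ∈ a.divisors, μ d * ∑' m, g (d * m)) := by
  have hterm (d : ℕ) (hd : d ∈ a.divisors) :
      HasSum (fun b => (μ d : ℝ) * if d ∣ b then g b else 0) (μ d * ∑' m, g (d * m)) := by
    have hd0 : d ≠ 0 := (Nat.pos_of_mem_divisors hd).ne'
    exact ((hasSum_ite_dvd_iff hd0).mpr
      (hg.comp_injective (mul_right_injective₀ hd0)).hasSum).mul_left _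
  refine (hasSum_sum hterm).congr_fun fun b => ?_
  rw [← one_mul (g b), ← zero_mul (g b), ← ite_mul, ← sum_divisors_ite_dvd_moebius ha, sum_mul]
  simp only [ite_mul, mul_ite, zero_mul, mul_zero, one_mul]

lemma tsum_sum_ite_gcd_eq_one {g : ℕ → ℕ → ℝ} {n : ℕ} (hg : ∀ a ∈ Icc 1 n, Summable (g a)) :
    ∑' b, ∑ a ∈ Icc 1 n, (if a.gcd b = 1 then g a b else 0)
      = ∑ d ∈ Icc 1 n, μ d * ∑ q ∈ Icc 1 (n / d), ∑' m, g (d * q) (d * m) := by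
  have hcoprime (a : ℕ) (ha : a ∈ Icc 1 n) :=
    hasSum_ite_gcd_eq_one (hg a ha) (ne_zero_of_mem_Icc_one ha)
  rw [(hasSum_sum hcoprime).tsum_eq, sum_Icc_sum_divisors fun d a => μ d * ∑' m, g a (d * m)]
  simp only [mul_sum]

lemma hasSum_moebius_div_sq : HasSum (fun d : ℕ => (μ d : ℝ) / d ^ 2) (6 / π ^ 2) := by
  have hre : 1 < (2 : ℂ).re := by norm_num
  have hπ : (π : ℂ) ≠ 0 := mod_cast pi_ne_zero
  have hval : LSeries (fun d => (μ d : ℂ)) 2 = (6 / π ^ 2 : ℝ) := by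
    have hmul := ArithmeticFunction.LSeries_zeta_mul_Lseries_moebius hre
    rw [ArithmeticFunction.LSeries_zeta_eq_riemannZeta hre, riemannZeta_two] at hmul
    push_cast
    field_simp at hmul ⊢
    linear_combination hmul
  have hsum := (ArithmeticFunction.LSeriesSummable_moebius_iff.mpr hre).LSeriesHasSum
  rw [hval] at hsum
  rw [← Complex.hasSum_ofReal]
  refine HasSum.congr_fun hsum fun d => ?_
  rcases eq_or_ne d 0 with rfl | hd
  · simp
  · simp [LSeries.term_of_ne_zero hd]

lemma abs_moebius_div_sq_le (d : ℕ) : |(μ d : ℝ) / d ^ 2| ≤ ((d : ℝ) ^ 2)⁻¹ := by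
  rw [abs_div, abs_sq, div_eq_mul_inv]
  exact mul_le_of_le_one_left (by positivity) (mod_cast ArithmeticFunction.abs_moebius_le_one)

lemma abs_sum_moebius_div_sq_sub_le (n : ℕ) :
    |∑ d ∈ Icc 1 n, (μ d : ℝ) / d ^ 2 - 6 / π ^ 2| ≤ 2 / (n + 1 : ℝ) := by
  have hlim := hasSum_moebius_div_sq.tendsto_sum_nat.const_sub (∑ d ∈ Icc 1 n, (μ d : ℝ) / d ^ 2)
  refine le_of_tendsto hlim.abs ?_
  filter_upwards [eventually_gt_atTop n] with N hN
  have hsplit : ∑ d ∈ range N, (μ d : ℝ) / d ^ 2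
      = ∑ d ∈ Icc 1 n, (μ d : ℝ) / d ^ 2 + ∑ d ∈ Ioo n N, (μ d : ℝ) / d ^ 2 := by
    have hunion : range N = insert 0 (Icc 1 n ∪ Ioo n N) := by
      ext
      simp only [mem_range, mem_insert, mem_union, mem_Icc, mem_Ioo]
      omega
    have hdisj : Disjoint (Icc 1 n) (Ioo n N) := by
      rw [disjoint_left]
      intro d
      simp only [mem_Icc, mem_Ioo]
      omega
    rw [hunion, sum_insert_of_eq_zero_if_notMem (by simp), sum_union hdisj]
  rw [hsplit, sub_add_cancel_left, abs_neg]
  exact (abs_sum_le_sum_abs _ _).trans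
    ((sum_le_sum fun d _ => abs_moebius_div_sq_le d).trans (sum_Ioo_inv_sq_le n N))

lemma abs_sum_moebius_div_sq_mul_sub_le {S : ℕ → ℝ} {E K : ℝ} {n : ℕ} (hK : 0 ≤ K)
    (hS : ∀ d ∈ Icc 1 n, |S d - E| ≤ K * d) :
    |∑ d ∈ Icc 1 n, (μ d : ℝ) / d ^ 2 * S d - 6 / π ^ 2 * E|
      ≤ K * (1 + log n) + 2 / (n + 1 : ℝ) * |E| := by
  have hharmonic : ∑ d ∈ Icc 1 n, (d : ℝ)⁻¹ ≤ 1 + log n := by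
    simpa [harmonic_eq_sum_Icc] using harmonic_le_one_add_log n
  have hterm : ∀ d ∈ Icc 1 n, |(μ d : ℝ) / d ^ 2 * (S d - E)| ≤ K * (d : ℝ)⁻¹ := by
    intro d hd
    have hd0 : (d : ℝ) ≠ 0 := Nat.cast_ne_zero.mpr (ne_zero_of_mem_Icc_one hd)
    calc |(μ d : ℝ) / d ^ 2 * (S d - E)| ≤ ((d : ℝ) ^ 2)⁻¹ * (K * d) := by
          rw [abs_mul]
          gcongr
          exacts [abs_moebius_div_sq_le d, hS d hd]
      _ = K * (d : ℝ)⁻¹ := by field_simp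
  calc |∑ d ∈ Icc 1 n, (μ d : ℝ) / d ^ 2 * S d - 6 / π ^ 2 * E|
      = |∑ d ∈ Icc 1 n, (μ d : ℝ) / d ^ 2 * (S d - E)
          + (∑ d ∈ Icc 1 n, (μ d : ℝ) / d ^ 2 - 6 / π ^ 2) * E| := by
        simp only [mul_sub, sum_sub_distrib, sub_mul, sum_mul, sub_add_sub_cancel]
    _ ≤ ∑ d ∈ Icc 1 n, K * (d : ℝ)⁻¹ + 2 / (n + 1 : ℝ) * |E| := by
        refine (abs_add_le _ _).trans (add_le_add ?_ ?_)
        · exact (abs_sum_le_sum_abs _ _).trans (sum_le_sum hterm)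
        · rw [abs_mul]
          gcongr
          exact abs_sum_moebius_div_sq_sub_le n
    _ ≤ K * (1 + log n) + 2 / (n + 1 : ℝ) * |E| := by
        rw [← mul_sum]
        gcongr

/-! ### The dilogarithm -/

lemma antitoneOn_dslope_of_concaveOn {s : Set ℝ} {f : ℝ → ℝ} {x : ℝ} (hf : ConcaveOn ℝ s f)
    (hx : x ∈ s) (hd : DifferentiableAt ℝ f x) : AntitoneOn (dslope f x) s := by
  intro u hu v hv huv
  rcases eq_or_ne u v with rfl | huv_ne
  · rfl
  have huv_lt : u < v := huv.lt_of_ne huv_ne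
  rcases eq_or_ne u x with rfl | hux
  · rw [dslope_same, dslope_of_ne f huv_ne.symm]
    exact hf.slope_le_deriv hu hv huv_lt hd
  rcases eq_or_ne v x with rfl | hvx
  · rw [dslope_same, dslope_of_ne f hux, slope_comm]
    exact hf.deriv_le_slope hu hv huv_lt hd
  rw [dslope_of_ne f hux, dslope_of_ne f hvx]
  exact hf.slope_anti hx ⟨hu, hux⟩ ⟨hv, hvx⟩ huv

lemma antitoneOn_dslope_log_one_add :
    AntitoneOn (fun w => dslope log 1 (1 + w)) (Set.Ici 0) := by
  intro u hu v hv huv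
  have hpos {w : ℝ} (hw : w ∈ Set.Ici 0) : 1 + w ∈ Set.Ioi (0 : ℝ) :=
    add_pos_of_pos_of_nonneg one_pos hw
  exact antitoneOn_dslope_of_concaveOn strictConcaveOn_log_Ioi.concaveOn (Set.mem_Ioi.mpr one_pos)
    (differentiableAt_log one_ne_zero) (hpos hu) (hpos hv) (by gcongr)

lemma dslope_log_one_add {w : ℝ} (hw : w ≠ 0) : dslope log 1 (1 + w) = log (1 + w) / w := by
  rw [dslope_of_ne log (by simpa using hw), slope_def_field]
  simp

lemma dslope_log_one_add_nonneg {w : ℝ} (hw : 0 ≤ w) : 0 ≤ dslope log 1 (1 + w) := by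
  rcases hw.eq_or_lt with rfl | hw
  · simp
  · rw [dslope_log_one_add hw.ne']
    exact div_nonneg (log_nonneg (by linarith)) hw.le

lemma tsum_pow_div_add_one {z : ℝ} (hz : |z| < 1) :
    ∑' k : ℕ, z ^ k / ((k : ℝ) + 1) = dslope log 1 (1 - z) := by
  rcases eq_or_ne z 0 with rfl | hz0
  · rw [tsum_eq_single 0 fun k hk => by simp [hk]]
    simp
  · rw [sub_eq_add_neg, dslope_log_one_add (neg_ne_zero.mpr hz0), ← sub_eq_add_neg,
      div_neg, ← neg_div, ← (hasSum_pow_div_log_of_abs_lt_one hz).tsum_eq, ← tsum_div_const]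
    refine tsum_congr fun k => ?_
    rw [pow_succ]
    field_simp

lemma hasDerivAt_Li2 {z : ℝ} (hz : |z| < 1) : HasDerivAt Li2 (dslope log 1 (1 - z)) z := by
  rw [← tsum_pow_div_add_one hz]
  obtain ⟨r, hzr, hr⟩ := exists_between hz
  have hr0 : 0 < r := (abs_nonneg z).trans_lt hzr
  have hterm (k : ℕ) (y : ℝ) :
      HasDerivAt (fun w => w ^ (k + 1) / ((k : ℝ) + 1) ^ 2) (y ^ k / ((k : ℝ) + 1)) y := by
    convert! (hasDerivAt_pow (k + 1) y).div_const (((k : ℝ) + 1) ^ 2) using 1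
    push_cast
    field_simp
  have hbound (k : ℕ) (y : ℝ) (hy : y ∈ Metric.ball 0 r) : ‖y ^ k / ((k : ℝ) + 1)‖ ≤ r ^ k := by
    rw [norm_div, norm_pow, norm_of_nonneg (by positivity : 0 ≤ (k : ℝ) + 1)]
    exact (div_le_self (by positivity) (by simp)).trans
      (pow_le_pow_left₀ (norm_nonneg y) (mem_ball_zero_iff.mp hy).le k)
  exact hasDerivAt_tsum_of_isPreconnected (summable_geometric_of_lt_one hr0.le hr)
    Metric.isOpen_ball (convex_ball 0 r).isPreconnected (fun k y _ => hterm k y) hbound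
    (Metric.mem_ball_self hr0) (by simp) (by simpa using hzr)

lemma continuousOn_Li2 : ContinuousOn Li2 (Set.Icc (-1) 1) := by
  have hsummable : Summable fun k : ℕ => 1 / ((k : ℝ) + 1) ^ 2 := by
    simpa using (summable_nat_add_iff 1).mpr (summable_one_div_nat_pow.mpr one_lt_two)
  refine continuousOn_tsum (fun k => by fun_prop) hsummable fun k z hz => ?_
  rw [norm_div, norm_pow, norm_of_nonneg (by positivity : 0 ≤ ((k : ℝ) + 1) ^ 2)]
  gcongr
  exact pow_le_one₀ (norm_nonneg z) (abs_le.mpr hz)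

lemma integral_dslope_log_one_add {t : ℝ} (ht0 : 0 ≤ t) (ht1 : t ≤ 1) :
    ∫ w in 0..t, dslope log 1 (1 + w) = -Li2 (-t) := by
  have hcont : ContinuousOn (fun w => -Li2 (-w)) (Set.Icc 0 t) :=
    (continuousOn_Li2.comp continuousOn_neg fun w hw =>
      ⟨by linarith [hw.2], by linarith [hw.1]⟩).neg
  have hderiv (w : ℝ) (hw : w ∈ Set.Ioo 0 t) :
      HasDerivAt (fun w => -Li2 (-w)) (dslope log 1 (1 + w)) w := by
    have habs : |-w| < 1 := by
      rw [abs_neg, abs_of_pos hw.1]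
      exact hw.2.trans_le ht1
    simpa [Function.comp_def] using ((hasDerivAt_Li2 habs).comp w (hasDerivAt_neg w)).fun_neg
  have hint : IntervalIntegrable (fun w => dslope log 1 (1 + w)) volume 0 t :=
    AntitoneOn.intervalIntegrable <| antitoneOn_dslope_log_one_add.mono <| by
      simp [Set.uIcc_of_le ht0, Set.Icc_subset_Ici_self]
  rw [intervalIntegral.integral_eq_sub_of_hasDerivAt_of_le ht0 hcont hderiv hint]
  simp [Li2]

lemma abs_Li2_neg_le {t : ℝ} (ht0 : 0 ≤ t) (ht1 : t ≤ 1) : |Li2 (-t)| ≤ t := by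
  rw [← abs_neg, ← integral_dslope_log_one_add ht0 ht1, abs_of_nonneg]
  · simpa using integral_le_of_antitoneOn ht0
      (antitoneOn_dslope_log_one_add.mono Set.Icc_subset_Ici_self)
  · exact intervalIntegral.integral_nonneg ht0 fun w hw => dslope_log_one_add_nonneg hw.1

lemma abs_sum_log_one_add_mul_div_add_Li2_le {δ A : ℝ} (hδ : 0 < δ) (hA : 0 ≤ A)
    (hδA : δ * A ≤ 1) :
    |∑ q ∈ Icc 1 ⌊A⌋₊, log (1 + δ * q) / q + Li2 (-(δ * A))| ≤ δ := by
  have anti : AntitoneOn (fun t => dslope log 1 (1 + δ * t)) (Set.Icc 0 A) :=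
    fun u hu v hv huv => antitoneOn_dslope_log_one_add (mul_nonneg hδ.le hu.1)
      (mul_nonneg hδ.le hv.1) (mul_le_mul_of_nonneg_left huv hδ.le)
  have hriemann := abs_sum_Icc_one_sub_integral_le hA anti
    (dslope_log_one_add_nonneg (mul_nonneg hδ.le hA))
  have hterm (q : ℕ) (hq : q ∈ Icc 1 ⌊A⌋₊) :
      log (1 + δ * q) / q = δ * dslope log 1 (1 + δ * q) := by
    have hq0 : (q : ℝ) ≠ 0 := Nat.cast_ne_zero.mpr (ne_zero_of_mem_Icc_one hq)
    rw [dslope_log_one_add (mul_ne_zero hδ.ne' hq0)]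
    field_simp
  have hintegral : δ * ∫ t in 0..A, dslope log 1 (1 + δ * t) = -Li2 (-(δ * A)) := by
    rw [intervalIntegral.mul_integral_comp_mul_left (f := fun w => dslope log 1 (1 + w)),
      mul_zero, integral_dslope_log_one_add (mul_nonneg hδ.le hA) hδA]
  rw [sum_congr rfl hterm, ← mul_sum, ← sub_neg_eq_add, ← hintegral, ← mul_sub, abs_mul,
    abs_of_pos hδ]
  exact mul_le_of_le_one_right hδ.le (by simpa using hriemann)

/-! ### The homogeneous kernel -/

section Kernel

variable {a x B : ℝ}

lemma antitoneOn_inv_mul_add (ha : 0 ≤ a) :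
    AntitoneOn (fun t : ℝ => (t * (t + a))⁻¹) (Set.Ioi 0) := by
  intro u hu v hv huv
  have hu0 : 0 < u := hu
  have hv0 : 0 < v := hv
  dsimp only
  gcongr

lemma inv_mul_add_nonneg (ha : 0 ≤ a) (hB : 0 ≤ B) : ∀ t ∈ Set.Ioi B, 0 ≤ (t * (t + a))⁻¹ := by
  intro t ht
  have ht0 : 0 < t := hB.trans_lt ht
  positivity

lemma hasDerivAt_neg_log_one_add_div_div {t : ℝ} (ha : 0 < a) (ht : 0 < t) :
    HasDerivAt (fun t => -(log (1 + a / t) / a)) (t * (t + a))⁻¹ t := by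
  have hdiv : HasDerivAt (fun t => 1 + a / t) (-a / t ^ 2) t := by
    simpa [div_eq_mul_inv] using ((hasDerivAt_inv ht.ne').const_mul a).const_add 1
  have hpos : 0 < 1 + a / t := by positivity
  convert! ((hdiv.log hpos.ne').div_const a).fun_neg using 1
  field_simp

lemma tendsto_neg_log_one_add_div_div_atTop :
    Tendsto (fun t => -(log (1 + a / t) / a)) atTop (nhds 0) := by
  have hdiv : Tendsto (fun t => 1 + a / t) atTop (nhds 1) := by
    simpa using (tendsto_const_nhds (x := a)).div_atTop tendsto_id |>.const_add 1
  simpa using ((hdiv.log one_ne_zero).div_const a).neg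

lemma integrableOn_Ioi_inv_mul_add (ha : 0 < a) (hB : 0 < B) :
    IntegrableOn (fun t => (t * (t + a))⁻¹) (Set.Ioi B) :=
  integrableOn_Ioi_deriv_of_nonneg'
    (fun _ ht => hasDerivAt_neg_log_one_add_div_div ha (hB.trans_le ht))
    (inv_mul_add_nonneg ha.le hB.le) tendsto_neg_log_one_add_div_div_atTop

lemma integral_Ioi_inv_mul_add (ha : 0 < a) (hB : 0 < B) :
    ∫ t in Set.Ioi B, (t * (t + a))⁻¹ = log (1 + a / B) / a := by
  rw [integral_Ioi_of_hasDerivAt_of_nonneg'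
    (fun _ ht => hasDerivAt_neg_log_one_add_div_div ha (hB.trans_le ht))
    (inv_mul_add_nonneg ha.le hB.le) tendsto_neg_log_one_add_div_div_atTop]
  simp

/-- The summand `x / (Q' (Q' + x Q))` of `NN`, cut off to `Q' ≥ B`. Apart from the cutoff it is
homogeneous of degree `-2` in `(Q, Q')`. -/
noncomputable def cutoffKernel (x B : ℝ) (Q Q' : ℕ) : ℝ :=
  if B ≤ Q' then x / (Q' * (Q' + x * Q)) else 0

lemma cutoffKernel_mul_mul {d : ℕ} (hd : d ≠ 0) (q m : ℕ) :
    cutoffKernel x B (d * q) (d * m) = cutoffKernel x (B / d) q m / d ^ 2 := by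
  have hd0 : (0 : ℝ) < d := Nat.cast_pos.mpr (Nat.pos_of_ne_zero hd)
  have hiff : B ≤ (d * m : ℕ) ↔ B / d ≤ m := by rw [div_le_iff₀ hd0, mul_comm, Nat.cast_mul]
  simp only [cutoffKernel, hiff, ite_div, zero_div]
  congr 1
  push_cast
  rw [div_div]
  congr 1
  ring

lemma cutoffKernel_eq_mul_ite (q m : ℕ) :
    cutoffKernel x B q m = x * if B ≤ m then ((m : ℝ) * (m + x * q))⁻¹ else 0 := by
  rw [cutoffKernel, mul_ite, mul_zero, div_eq_mul_inv]

lemma summable_cutoffKernel (hx : 0 < x) (hB : 0 < B) {q : ℕ} (hq : q ≠ 0) :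
    Summable (cutoffKernel x B q) := by
  have ha : 0 < x * q := by positivity
  have h := (summable_natCast_of_antitoneOn_Ici
    ((antitoneOn_inv_mul_add ha.le).mono (Set.Ici_subset_Ioi.mpr hB))
    (integrableOn_Ioi_inv_mul_add ha hB)
    (inv_mul_add_nonneg ha.le hB.le)).indicator {m : ℕ | B ≤ m}
  exact (h.mul_left x).congr fun m => (cutoffKernel_eq_mul_ite q m).symm

lemma abs_tsum_cutoffKernel_sub_le (hx : 0 < x) (hB : 0 < B) {q : ℕ} (hq : q ≠ 0) :
    |∑' m, cutoffKernel x B q m - log (1 + x / B * q) / q| ≤ x / B ^ 2 := by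
  have ha : 0 < x * q := by positivity
  have htail := abs_tsum_ite_le_sub_integral_Ioi_le hB.le
    ((antitoneOn_inv_mul_add ha.le).mono (Set.Ici_subset_Ioi.mpr hB))
    (integrableOn_Ioi_inv_mul_add ha hB) (inv_mul_add_nonneg ha.le hB.le)
  rw [integral_Ioi_inv_mul_add ha hB] at htail
  have hlog : log (1 + x / B * q) / q = x * (log (1 + x * q / B) / (x * q)) := by
    rw [div_mul_eq_mul_div]
    field_simp
  calc |∑' m, cutoffKernel x B q m - log (1 + x / B * q) / q|
      = x * |∑' m : ℕ, (if B ≤ m then ((m : ℝ) * (m + x * q))⁻¹ else 0)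
          - log (1 + x * q / B) / (x * q)| := by
        rw [hlog, tsum_congr (cutoffKernel_eq_mul_ite q), tsum_mul_left, ← mul_sub, abs_mul,
          abs_of_pos hx]
    _ ≤ x * (B * (B + x * q))⁻¹ := by gcongr
    _ ≤ x / B ^ 2 := by
        rw [div_eq_mul_inv, sq]
        gcongr
        linarith

lemma abs_sum_tsum_cutoffKernel_add_Li2_le {c : ℝ} (hx : 0 < x) (hB : 0 < B) (hc : 0 ≤ c)
    (hxc : x * c ≤ 1) :
    |∑ q ∈ Icc 1 ⌊c * B⌋₊, ∑' m, cutoffKernel x B q m + Li2 (-(x * c))| ≤ (c + 1) * x / B := by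
  have hcB : 0 ≤ c * B := by positivity
  have hmesh : x / B * (c * B) = x * c := by field_simp
  have hriemann := abs_sum_log_one_add_mul_div_add_Li2_le (div_pos hx hB) hcB (hmesh.trans_le hxc)
  rw [hmesh] at hriemann
  have htails : |∑ q ∈ Icc 1 ⌊c * B⌋₊, (∑' m, cutoffKernel x B q m - log (1 + x / B * q) / q)|
      ≤ c * x / B := by
    calc _ ≤ ∑ _q ∈ Icc 1 ⌊c * B⌋₊, x / B ^ 2 :=
          (abs_sum_le_sum_abs _ _).trans <| sum_le_sum fun q hq =>
            abs_tsum_cutoffKernel_sub_le hx hB (ne_zero_of_mem_Icc_one hq)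
      _ = ⌊c * B⌋₊ * (x / B ^ 2) := by simp
      _ ≤ c * B * (x / B ^ 2) := by
          gcongr
          exact Nat.floor_le hcB
      _ = c * x / B := by field_simp
  calc _ = |∑ q ∈ Icc 1 ⌊c * B⌋₊, (∑' m, cutoffKernel x B q m - log (1 + x / B * q) / q)
          + (∑ q ∈ Icc 1 ⌊c * B⌋₊, log (1 + x / B * q) / q + Li2 (-(x * c)))| := by
        rw [sum_sub_distrib, sub_add, sub_add_cancel_left, sub_neg_eq_add]
    _ ≤ c * x / B + x / B := (abs_add_le _ _).trans (add_le_add htails hriemann)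
    _ = (c + 1) * x / B := by ring

lemma abs_tsum_sum_gcd_cutoffKernel_sub_le {c : ℝ} (hx : 0 < x) (hB : 0 < B) (hc : 0 < c)
    (hxc : x * c ≤ 1) :
    |∑' b, ∑ a ∈ Icc 1 ⌊c * B⌋₊, (if a.gcd b = 1 then cutoffKernel x B a b else 0)
      - 6 / π ^ 2 * -Li2 (-(x * c))| ≤ (c + 1) * x / B * (1 + log ⌊c * B⌋₊) + 2 * x / B := by
  set n := ⌊c * B⌋₊
  have hmoebius : ∑' b, ∑ a ∈ Icc 1 n, (if a.gcd b = 1 then cutoffKernel x B a b else 0)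
      = ∑ d ∈ Icc 1 n, (μ d : ℝ) / d ^ 2 *
          ∑ q ∈ Icc 1 ⌊c * (B / d)⌋₊, ∑' m, cutoffKernel x (B / d) q m := by
    rw [tsum_sum_ite_gcd_eq_one fun a ha =>
      summable_cutoffKernel hx hB (ne_zero_of_mem_Icc_one ha)]
    refine sum_congr rfl fun d hd => ?_
    have hd0 : d ≠ 0 := ne_zero_of_mem_Icc_one hd
    rw [mul_div_assoc', Nat.floor_div_natCast]
    simp only [cutoffKernel_mul_mul hd0, tsum_div_const, ← sum_div]
    ring
  have hscaled (d : ℕ) (hd : d ∈ Icc 1 n) :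
      |∑ q ∈ Icc 1 ⌊c * (B / d)⌋₊, ∑' m, cutoffKernel x (B / d) q m - -Li2 (-(x * c))|
        ≤ (c + 1) * x / B * d := by
    have hd0 : (0 : ℝ) < d := Nat.cast_pos.mpr (mem_Icc.mp hd).1
    rw [sub_neg_eq_add, div_mul_eq_mul_div, ← div_div_eq_mul_div]
    exact abs_sum_tsum_cutoffKernel_add_Li2_le hx (div_pos hB hd0) hc.le hxc
  have hLi2 : 2 / (n + 1 : ℝ) * |-Li2 (-(x * c))| ≤ 2 * x / B := by
    have hcn : c * B ≤ n + 1 := (Nat.lt_floor_add_one _).le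
    calc 2 / (n + 1 : ℝ) * |-Li2 (-(x * c))| ≤ 2 / (c * B) * (x * c) := by
          rw [abs_neg]
          gcongr
          exact abs_Li2_neg_le (by positivity) hxc
      _ = 2 * x / B := by field_simp
  rw [hmoebius]
  exact (abs_sum_moebius_div_sq_mul_sub_le (by positivity) hscaled).trans (by gcongr)

end Kernel

/-! ### The asymptotic formula -/

lemma NN_eq_two_mul_tsum_cutoffKernel {x1 x2 y1 y2 R : ℝ} (hy1 : 0 ≤ y1) (hy2 : 0 < y2)
    (hcase : y1 * y2 ≤ x2) (hR : 0 ≤ R) :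
    NN x1 x2 y1 y2 R = 2 * ∑' Q', ∑ Q ∈ Icc 1 ⌊y1 * R⌋₊,
      if Q.gcd Q' = 1 then cutoffKernel x1 (R / y2) Q Q' else 0 := by
  rw [NN]
  congr 1
  refine tsum_congr fun Q' => ?_
  by_cases hQ' : R / y2 ≤ Q'
  · have hx2 : 0 ≤ x2 := (mul_nonneg hy1 hy2.le).trans hcase
    have hmin : y1 * R ≤ x2 * Q' :=
      calc y1 * R = y1 * y2 * (R / y2) := by field_simp
        _ ≤ x2 * Q' := mul_le_mul hcase hQ' (by positivity) hx2
    simp only [cutoffKernel, if_pos hQ', min_eq_right hmin]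
  · simp [cutoffKernel, hQ']

lemma abs_NN_sub_le {x1 x2 y1 y2 R : ℝ} (hx1 : 0 < x1) (hy1 : 0 < y1) (hy2 : 0 < y2)
    (hcase : y1 * y2 ≤ x2) (hle : x1 * y1 * y2 ≤ 1) (hR : 0 < R) :
    |NN x1 x2 y1 y2 R - (-(2 / (π ^ 2 / 6)) * Li2 (-(x1 * y1 * y2)))|
      ≤ 2 * x1 * y2 / R * ((y1 * y2 + 1) * (1 + log ⌊y1 * R⌋₊) + 2) := by
  have hscale : y1 * y2 * (R / y2) = y1 * R := by field_simp
  have hcoprime := abs_tsum_sum_gcd_cutoffKernel_sub_le hx1 (div_pos hR hy2) (mul_pos hy1 hy2)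
    (by rwa [← mul_assoc])
  rw [hscale, ← mul_assoc] at hcoprime
  rw [NN_eq_two_mul_tsum_cutoffKernel hy1.le hy2 hcase hR.le]
  calc _ = 2 * |∑' Q', ∑ Q ∈ Icc 1 ⌊y1 * R⌋₊,
          (if Q.gcd Q' = 1 then cutoffKernel x1 (R / y2) Q Q' else 0)
          - 6 / π ^ 2 * -Li2 (-(x1 * y1 * y2))| := by
        rw [← abs_two, ← abs_mul, abs_two]
        congr 1
        field_simp
    _ ≤ 2 * ((y1 * y2 + 1) * x1 / (R / y2) * (1 + log ⌊y1 * R⌋₊) + 2 * x1 / (R / y2)) := by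
        gcongr
    _ = 2 * x1 * y2 / R * ((y1 * y2 + 1) * (1 + log ⌊y1 * R⌋₊) + 2) := by
        field_simp

lemma log_floor_mul_le {y Y R : ℝ} (hyY : y ≤ Y) (hY : 0 < Y) (hR : 1 ≤ R) :
    log ⌊y * R⌋₊ ≤ Y + log R := by
  have hlogR : 0 ≤ log R := log_nonneg hR
  rcases Nat.eq_zero_or_pos ⌊y * R⌋₊ with h0 | hpos
  · simp only [h0, Nat.cast_zero, log_zero]
    positivity
  · have hR0 : 0 < R := one_pos.trans_le hR
    calc log ⌊y * R⌋₊ ≤ log (Y * R) := by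
          gcongr
          exact (Nat.floor_le (zero_le_one.trans (Nat.floor_pos.mp hpos))).trans (by gcongr)
      _ = log Y + log R := log_mul hY.ne' hR0.ne'
      _ ≤ Y + log R := by
          gcongr
          exact (log_le_sub_one_of_pos hY).trans (sub_le_self Y zero_le_one)

theorem N_asymptotic_second_case_general {Y : ℝ} (hY : 0 < Y) :
    ∃ C : ℝ, 0 < C ∧ ∀ x1 x2 y1 y2 : ℝ, 0 < x1 → 0 < y1 → 0 < y2 → y1 ≤ Y → y2 ≤ Y →
      y1 * y2 ≤ x2 → x1 * y1 * y2 ≤ 1 → ∀ R : ℝ, 2 ≤ R →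
        |NN x1 x2 y1 y2 R - (-(2 / (π ^ 2 / 6)) * Li2 (-(x1 * y1 * y2)))| ≤
          C * x1 * log R / R := by
  refine ⟨2 * Y * ((Y ^ 2 + 1) * (2 * Y + 3) + 4), by positivity, ?_⟩
  intro x1 x2 y1 y2 hx1 hy1 hy2 hy1Y hy2Y hcase hle R hR
  have hR0 : 0 < R := two_pos.trans_le hR
  have hlogR : 1 ≤ 2 * log R := by
    linarith [log_two_gt_d9, log_le_log two_pos hR]
  have hlog : 1 + log ⌊y1 * R⌋₊ ≤ (2 * Y + 3) * log R := by
    have hYlog : Y * 1 ≤ Y * (2 * log R) := by gcongr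
    linarith [log_floor_mul_le hy1Y hY (one_le_two.trans hR)]
  have hyY : y1 * y2 ≤ Y ^ 2 := by
    rw [sq]
    gcongr
  calc _ ≤ 2 * x1 * y2 / R * ((y1 * y2 + 1) * (1 + log ⌊y1 * R⌋₊) + 2) :=
        abs_NN_sub_le hx1 hy1 hy2 hcase hle hR0
    _ ≤ 2 * x1 * Y / R * ((Y ^ 2 + 1) * ((2 * Y + 3) * log R) + 4 * log R) := by
        gcongr
        linarith
    _ = 2 * Y * ((Y ^ 2 + 1) * (2 * Y + 3) + 4) * x1 * log R / R := by ring

theorem N_asymptotic_second_case (x1 x2 y1 y2 : ℝ)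
    (hx1 : 0 < x1) (hx1' : x1 ≤ 1)
    (hx2 : 0 < x2) (hx2' : x2 ≤ 1) (hy1 : 0 < y1) (hy1' : y1 ≤ 1)
    (hy2 : 0 < y2) (hy2' : y2 ≤ 1) (hcase : y1 * y2 < x2) :
    ∃ C : ℝ, 0 < C ∧ ∀ R : ℝ, 2 ≤ R →
      |NN x1 x2 y1 y2 R - (-(2 / (π ^ 2 / 6)) * Li2 (-(x1 * y1 * y2)))| ≤
        C * x1 * Real.log R / R := by
  obtain ⟨C, hC, hbound⟩ := N_asymptotic_second_case_general one_pos
  exact ⟨C, hC, hbound x1 x2 y1 y2 hx1 hy1 hy2 hy1' hy2' hcase.le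
    (mul_le_one₀ (mul_le_one₀ hx1' hy1.le hy1') hy2.le hy2')⟩
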